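/- arXiv:2003.00372 — 4 statements merged into one kernel-verified Lean document; each statement's English description precedes it below -/
import Mathlib

section
/- Let p be a polynomial with complex coefficients of degree n ≥ 2, z₀ ∈ ℂ a seed, and S₀ = {z ∈ ℂ : |p(z)| ≤ |p(z₀)|}. Then the RNM orbit of z₀ remains in S₀; in fact |p(z_{t+1})| ≤ |p(z_t)| for every t ≥ 0, with strict inequality whenever p(z_t) ≠ 0. -/
open Polynomial Filter Topology
open scoped Classical

noncomputable section

/-- The `j`-th derivative of `p`, evaluated at `z`. -/
def dEval (p : Polynomial ℂ) (j : ℕ) (z : ℂ) : ℂ :=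
  (Polynomial.derivative^[j] p).eval z

/-- The index `k(z) = min {j ≥ 1 : p^{(j)}(z) ≠ 0}`. -/
def kIndex (p : Polynomial ℂ) (z : ℂ) : ℕ :=
  sInf {j : ℕ | 1 ≤ j ∧ dEval p j z ≠ 0}

/-- `A(z) = max {|p^{(j)}(z)|/j! : j = 0, …, n}`, where `n` is the degree of `p`. -/
def Amax (p : Polynomial ℂ) (z : ℂ) : ℝ :=
  (Finset.range (p.natDegree + 1)).sup' Finset.nonempty_range_add_one
    (fun j => ‖dEval p j z‖ / (Nat.factorial j))

/-- `u_m = (1/m!) · p(z) · conj(p^{(m)}(z))`. -/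
def uPar (p : Polynomial ℂ) (m : ℕ) (z : ℂ) : ℂ :=
  (1 / (Nat.factorial m : ℂ)) * p.eval z * (starRingEnd ℂ) (dEval p m z)

/-- `γ = 2 · Re(u_m^(m-1))`. -/
def gammaPar (p : Polynomial ℂ) (m : ℕ) (z : ℂ) : ℝ :=
  2 * ((uPar p m z) ^ (m - 1)).re

/-- `δ = -2 · Im(u_m^(m-1))`. -/
def deltaPar (p : Polynomial ℂ) (m : ℕ) (z : ℂ) : ℝ :=
  -2 * ((uPar p m z) ^ (m - 1)).im

/-- `c_m = max {|γ|, |δ|}`. -/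
def cPar (p : Polynomial ℂ) (m : ℕ) (z : ℂ) : ℝ :=
  max |gammaPar p m z| |deltaPar p m z|

/-- The angle `θ`: `0` if `c = |γ|, γ < 0`; `π/m` if `c = |γ|, γ > 0`;
`π/(2m)` if `c = |δ|, δ < 0`; `3π/(2m)` if `c = |δ|, δ > 0`. -/
def thetaPar (p : Polynomial ℂ) (m : ℕ) (z : ℂ) : ℝ :=
  if cPar p m z = |gammaPar p m z| then
    if gammaPar p m z < 0 then 0 else Real.pi / m
  else
    if deltaPar p m z < 0 then Real.pi / (2 * m) else 3 * Real.pi / (2 * m)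

/-- `C_m = c_m · |u_m|^(2-m) / (6 · A(z)²)`. -/
def CPar (p : Polynomial ℂ) (m : ℕ) (z : ℂ) : ℝ :=
  cPar p m z * ‖uPar p m z‖ ^ ((2 : ℤ) - (m : ℤ)) / (6 * (Amax p z) ^ 2)

/-- The Robust Newton iterate with prescribed index `m`:
`z + (C_m/3) · (u_m/|u_m|) · e^(iθ)`. -/
def rniWith (p : Polynomial ℂ) (m : ℕ) (z : ℂ) : ℂ :=
  z + (↑(CPar p m z / 3) : ℂ) * (uPar p m z / (↑(‖uPar p m z‖) : ℂ)) *
    Complex.exp ((↑(thetaPar p m z) : ℂ) * Complex.I)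

/-- The Robust Newton iterate `N̂_p(z)`. -/
def RN (p : Polynomial ℂ) (z : ℂ) : ℂ := rniWith p (kIndex p z) z

/-- The RNM orbit of the seed `z₀`: `z_{t+1} = N̂_p(z_t)` when `p(z_t) ≠ 0`,
and `z_{t+1} = z_t` when `p(z_t) = 0`. -/
def rnmOrbit (p : Polynomial ℂ) (z₀ : ℂ) : ℕ → ℂ
  | 0 => z₀
  | t + 1 =>
      if p.eval (rnmOrbit p z₀ t) = 0 then rnmOrbit p z₀ t
      else RN p (rnmOrbit p z₀ t)

lemma rnm_core (a : ℕ → ℂ) (n k : ℕ) (hk : 1 ≤ k) (hkn : k ≤ n)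
    (hz : ∀ j, 0 < j → j < k → a j = 0) (A : ℝ) (hA : 0 < A)
    (hb : ∀ j, j ≤ n → ‖a j‖ ≤ A) (w : ℂ) (hw : 0 < ‖w‖) (hw' : ‖w‖ ≤ 1 / 9)
    (h : 2 * ((starRingEnd ℂ) (a 0) * (a k * w ^ k)).re ≤ -(18 * A ^ 2 * ‖w‖ ^ (k + 1))) :
    ‖∑ j ∈ Finset.range (n + 1), a j * w ^ j‖ < ‖a 0‖ := by
  set r := ‖w‖ with hr
  set S := a k * w ^ k with hS
  set R := ∑ j ∈ Finset.Ico (k + 1) (n + 1), a j * w ^ j with hR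
  have hsum : ∑ j ∈ Finset.range (n + 1), a j * w ^ j = a 0 + (S + R) := by
    rw [← Finset.sum_range_add_sum_Ico _ (show k + 1 ≤ n + 1 by omega), Finset.sum_range_succ,
      ← hR, ← hS]
    have : ∑ j ∈ Finset.range k, a j * w ^ j = a 0 := by
      rw [Finset.sum_eq_single 0]
      · simp
      · intro j hj hj0
        rw [hz j (by omega) (by simpa using hj), zero_mul]
      · intro h0
        simp at h0
        omega
    rw [this]; ring
  have hSb : ‖S‖ ≤ A * r ^ k := by
    rw [hS, norm_mul, norm_pow]
    gcongr
    exact hb k hkn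
  have hRb : ‖R‖ ≤ A * (9 / 8 * r ^ (k + 1)) := by
    calc ‖R‖ ≤ ∑ j ∈ Finset.Ico (k + 1) (n + 1), A * r ^ j := by
          refine norm_sum_le_of_le _ fun j hj => ?_
          rw [norm_mul, norm_pow]
          have := hb j (by simp at hj; omega)
          gcongr
      _ = A * ∑ j ∈ Finset.Ico (k + 1) (n + 1), r ^ j := by rw [Finset.mul_sum]
      _ ≤ A * (r ^ (k + 1) / (1 - r)) := by
          gcongr
          exact geom_sum_Ico_le_of_lt_one hw.le (by linarith)
      _ ≤ _ := by
          gcongr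
          rw [div_le_iff₀ (by linarith)]
          have : 0 < r ^ (k + 1) := by positivity
          nlinarith
  have hrk : 0 < r ^ k := by positivity
  have hrk1 : r ^ (k + 1) = r ^ k * r := pow_succ _ _
  have hrkr : r ^ k ≤ r := by
    calc r ^ k ≤ r ^ 1 := pow_le_pow_of_le_one hw.le (by linarith) hk
      _ = r := pow_one r
  have hSR : ‖S + R‖ ≤ A * (9 / 8 * r ^ k) := by
    calc ‖S + R‖ ≤ ‖S‖ + ‖R‖ := norm_add_le _ _
      _ ≤ A * r ^ k + A * (9 / 8 * r ^ (k + 1)) := by linarith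
      _ = A * (r ^ k + 9 / 8 * (r ^ k * r)) := by rw [hrk1]; ring
      _ ≤ _ := by gcongr; nlinarith
  have hSR2 : ‖S + R‖ ^ 2 ≤ A ^ 2 * (81 / 64 * r ^ (k + 1)) := by
    calc ‖S + R‖ ^ 2 ≤ (A * (9 / 8 * r ^ k)) ^ 2 := by gcongr
      _ = A ^ 2 * (81 / 64 * (r ^ k * r ^ k)) := by ring
      _ ≤ A ^ 2 * (81 / 64 * (r ^ k * r)) := by gcongr
      _ = _ := by rw [hrk1]
  have hcR : ((starRingEnd ℂ) (a 0) * R).re ≤ A ^ 2 * (9 / 8 * r ^ (k + 1)) := by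
    calc ((starRingEnd ℂ) (a 0) * R).re ≤ ‖(starRingEnd ℂ) (a 0) * R‖ := Complex.re_le_norm _
      _ = ‖a 0‖ * ‖R‖ := by rw [norm_mul, RCLike.norm_conj]
      _ ≤ A * (A * (9 / 8 * r ^ (k + 1))) := by
          have := hb 0 (by omega)
          gcongr
      _ = _ := by ring
  have hsq : ‖a 0 + (S + R)‖ ^ 2 = ‖a 0‖ ^ 2 + 2 * ((starRingEnd ℂ) (a 0) * S).re
      + 2 * ((starRingEnd ℂ) (a 0) * R).re + ‖S + R‖ ^ 2 := by
    simp only [Complex.sq_norm, Complex.normSq_apply, Complex.add_re, Complex.add_im,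
      Complex.mul_re, Complex.conj_re, Complex.conj_im]
    ring
  rw [hsum]
  refine lt_of_pow_lt_pow_left₀ 2 (norm_nonneg _) ?_
  have : 0 < A ^ 2 * r ^ (k + 1) := by positivity
  rw [hsq]
  linarith

lemma rnm_taylor (p : Polynomial ℂ) (z w : ℂ) :
    p.eval (z + w) = ∑ j ∈ Finset.range (p.natDegree + 1),
      (dEval p j z / (Nat.factorial j : ℂ)) * w ^ j := by
  rw [add_comm, ← Polynomial.taylor_eval, Polynomial.eval_eq_sum_range, Polynomial.natDegree_taylor]
  refine Finset.sum_congr rfl fun j _ => ?_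
  rw [Polynomial.taylor_coeff, dEval, ← Polynomial.factorial_smul_hasseDeriv]
  have : (Nat.factorial j : ℂ) ≠ 0 := by exact_mod_cast Nat.factorial_ne_zero j
  simp
  field_simp
  simp

lemma rnm_top (p : Polynomial ℂ) (hp : p ≠ 0) (z : ℂ) : dEval p p.natDegree z ≠ 0 := by
  have h := Polynomial.factorial_smul_hasseDeriv (R := ℂ) p.natDegree
  have h1 : (Polynomial.taylor z p).coeff p.natDegree ≠ 0 := by
    rw [← Polynomial.natDegree_taylor p z]
    simpa using hp
  rw [Polynomial.taylor_coeff] at h1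
  rw [dEval, ← h]
  simpa [Nat.factorial_ne_zero] using h1

lemma rnm_dir (p : Polynomial ℂ) (m : ℕ) (hm : 1 ≤ m) (z : ℂ) :
    2 * (uPar p m z ^ (m - 1) * Complex.exp ((↑(thetaPar p m z) : ℂ) * Complex.I) ^ m).re
      = - cPar p m z := by
  have hm0 : (m : ℂ) ≠ 0 := by exact_mod_cast (by omega : m ≠ 0)
  rw [← Complex.exp_nat_mul]
  unfold thetaPar
  split_ifs with h1 h2 h2
  · rw [h1, abs_of_neg h2]; simp [gammaPar]
  · rw [h1, abs_of_nonneg (not_lt.1 h2)]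
    have : (m : ℂ) * (((Real.pi / m : ℝ) : ℂ) * Complex.I) = Real.pi * Complex.I := by
      push_cast; field_simp
    rw [this, Complex.exp_pi_mul_I]; simp [gammaPar]
  · have hc : cPar p m z = |deltaPar p m z| := by
      unfold cPar at h1 ⊢
      rcases max_choice |gammaPar p m z| |deltaPar p m z| with h | h
      · exact absurd h h1
      · exact h
    rw [hc, abs_of_neg h2]
    have : (m : ℂ) * (((Real.pi / (2 * m) : ℝ) : ℂ) * Complex.I) = Real.pi / 2 * Complex.I := by
      push_cast; field_simp
    rw [this, Complex.exp_pi_div_two_mul_I]; simp [deltaPar]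
  · have hc : cPar p m z = |deltaPar p m z| := by
      unfold cPar at h1 ⊢
      rcases max_choice |gammaPar p m z| |deltaPar p m z| with h | h
      · exact absurd h h1
      · exact h
    rw [hc, abs_of_nonneg (not_lt.1 h2)]
    have : (m : ℂ) * (((3 * Real.pi / (2 * m) : ℝ) : ℂ) * Complex.I)
        = Real.pi * Complex.I + Real.pi / 2 * Complex.I := by
      push_cast; field_simp; ring
    rw [this, Complex.exp_add, Complex.exp_pi_mul_I, Complex.exp_pi_div_two_mul_I]
    simp [deltaPar]

lemma rnm_c_pos (p : Polynomial ℂ) (m : ℕ) (z : ℂ) (hu : uPar p m z ≠ 0) : 0 < cPar p m z := by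
  have hU : uPar p m z ^ (m - 1) ≠ 0 := pow_ne_zero _ hu
  unfold cPar
  by_contra hcon
  have h1 := (le_max_left |gammaPar p m z| |deltaPar p m z|).trans (not_lt.1 hcon)
  have h2 := (le_max_right |gammaPar p m z| |deltaPar p m z|).trans (not_lt.1 hcon)
  have h1' := abs_nonpos_iff.1 h1
  have h2' := abs_nonpos_iff.1 h2
  simp only [gammaPar, deltaPar] at h1' h2'
  apply hU
  apply Complex.ext
  · simp only [Complex.zero_re]; linarith
  · simp only [Complex.zero_im]; linarith

lemma rnm_c_le (p : Polynomial ℂ) (m : ℕ) (z : ℂ) :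
    cPar p m z ≤ 2 * ‖uPar p m z‖ ^ (m - 1) := by
  unfold cPar gammaPar deltaPar
  rw [← norm_pow]
  have h1 := Complex.abs_re_le_norm (uPar p m z ^ (m - 1))
  have h2 := Complex.abs_im_le_norm (uPar p m z ^ (m - 1))
  refine max_le ?_ ?_
  · rw [abs_mul]; norm_num; rw [← norm_pow]; exact h1
  · rw [abs_mul]; norm_num; rw [← norm_pow]; exact h2

lemma rnm_step (p : Polynomial ℂ) (hdeg : 2 ≤ p.natDegree) (z : ℂ) (hz : p.eval z ≠ 0) :
    ‖p.eval (RN p z)‖ < ‖p.eval z‖ := by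
  have hp : p ≠ 0 := by rintro rfl; simp at hz
  have hne : {j : ℕ | 1 ≤ j ∧ dEval p j z ≠ 0}.Nonempty :=
    ⟨p.natDegree, by omega, rnm_top p hp z⟩
  obtain ⟨hk1, hkd⟩ : 1 ≤ kIndex p z ∧ dEval p (kIndex p z) z ≠ 0 := Nat.sInf_mem hne
  have hkn : kIndex p z ≤ p.natDegree := Nat.sInf_le ⟨by omega, rnm_top p hp z⟩
  have hmin : ∀ j, 0 < j → j < kIndex p z → dEval p j z = 0 := by
    intro j hj hjk
    by_contra hcon
    exact absurd (Nat.sInf_le (show j ∈ {j : ℕ | 1 ≤ j ∧ dEval p j z ≠ 0} from ⟨hj, hcon⟩))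
      (not_le.2 hjk)
  unfold RN rniWith
  generalize kIndex p z = k at *
  have hAb : ∀ j, j ≤ p.natDegree → ‖dEval p j z / (Nat.factorial j : ℂ)‖ ≤ Amax p z := by
    intro j hj
    rw [norm_div, Complex.norm_natCast]
    exact Finset.le_sup' (fun j => ‖dEval p j z‖ / (Nat.factorial j : ℝ))
      (Finset.mem_range.2 (by omega))
  have ha0 : dEval p 0 z / (Nat.factorial 0 : ℂ) = p.eval z := by simp [dEval]
  have hfk : (Nat.factorial k : ℂ) ≠ 0 := by exact_mod_cast Nat.factorial_ne_zero k
  have hA : 0 < Amax p z := by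
    have := hAb 0 (by omega)
    rw [ha0] at this
    exact (norm_pos_iff.2 hz).trans_le this
  have hu : uPar p k z ≠ 0 := by
    unfold uPar
    simp [hz, hkd, hfk]
  have huA : ‖uPar p k z‖ ≤ Amax p z ^ 2 := by
    have h0 := hAb 0 (by omega)
    have h1 := hAb k hkn
    rw [ha0] at h0
    have : ‖uPar p k z‖ = ‖p.eval z‖ * ‖dEval p k z / (Nat.factorial k : ℂ)‖ := by
      unfold uPar
      rw [norm_mul, norm_mul, RCLike.norm_conj, norm_div, norm_div]
      simp; ring
    rw [this, sq]
    gcongr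
  have hdir := rnm_dir p k hk1 z
  have hcp := rnm_c_pos p k z hu
  have hcl := rnm_c_le p k z
  have hconj : (starRingEnd ℂ) (p.eval z) * (dEval p k z / (Nat.factorial k : ℂ))
      = (starRingEnd ℂ) (uPar p k z) := by
    unfold uPar
    simp; ring
  have hupos : 0 < ‖uPar p k z‖ := norm_pos_iff.2 hu
  set u := uPar p k z with hudef
  set e := Complex.exp ((↑(thetaPar p k z) : ℂ) * Complex.I) with he
  have hen : ‖e‖ = 1 := by rw [he, Complex.norm_exp_ofReal_mul_I]
  set r := CPar p k z / 3 with hr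
  have hzp : ‖u‖ ^ ((2 : ℤ) - (k : ℤ)) * ‖u‖ ^ (k - 1) = ‖u‖ := by
    rw [← zpow_natCast, ← zpow_add₀ hupos.ne', Nat.cast_sub hk1]
    simp
  have hC : CPar p k z * (6 * Amax p z ^ 2) = cPar p k z * ‖u‖ ^ ((2 : ℤ) - (k : ℤ)) := by
    unfold CPar
    rw [← hudef]
    field_simp
  have hzpos : 0 < ‖u‖ ^ ((2 : ℤ) - (k : ℤ)) := zpow_pos hupos _
  have hCp : 0 < CPar p k z := by
    unfold CPar
    rw [← hudef]
    positivity
  have hrp : 0 < r := by positivity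
  have hr9 : r ≤ 1 / 9 := by
    have : CPar p k z * (6 * Amax p z ^ 2) ≤ 2 * Amax p z ^ 2 := by
      rw [hC]
      calc cPar p k z * ‖u‖ ^ ((2 : ℤ) - (k : ℤ))
          ≤ (2 * ‖u‖ ^ (k - 1)) * ‖u‖ ^ ((2 : ℤ) - (k : ℤ)) := by gcongr
        _ = 2 * ‖u‖ := by rw [mul_assoc, mul_comm (‖u‖ ^ (k - 1)), hzp]
        _ ≤ _ := by gcongr
    have hA2 : 0 < Amax p z ^ 2 := by positivity
    have : CPar p k z ≤ 1 / 3 := by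
      by_contra hcon
      push Not at hcon
      nlinarith
    rw [hr]; linarith
  have hwn : ‖(r : ℂ) * (u / (‖u‖ : ℂ)) * e‖ = r := by
    rw [norm_mul, norm_mul, hen, norm_div, Complex.norm_real, Complex.norm_real, norm_norm,
      div_self hupos.ne', Real.norm_of_nonneg hrp.le]
    simp
  rw [rnm_taylor]
  have hcore := rnm_core (fun j => dEval p j z / (Nat.factorial j : ℂ)) p.natDegree k hk1 hkn
    (fun j h0 h1 => by simp [hmin j h0 h1]) (Amax p z) hA hAb ((r : ℂ) * (u / (‖u‖ : ℂ)) * e)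
    (by rw [hwn]; exact hrp) (by rw [hwn]; exact hr9) ?_
  · simpa only [ha0] using hcore
  · rw [hwn]
    simp only [ha0]
    rw [← mul_assoc, hconj]
    have huc : (‖u‖ : ℂ) ≠ 0 := by exact_mod_cast hupos.ne'
    have hkey : (starRingEnd ℂ) u * ((r : ℂ) * (u / (‖u‖ : ℂ)) * e) ^ k
        = ((r ^ k * ‖u‖ ^ ((2 : ℤ) - (k : ℤ)) : ℝ) : ℂ) * (u ^ (k - 1) * e ^ k) := by
      have h1 : (starRingEnd ℂ) u * u = (‖u‖ : ℂ) ^ 2 := Complex.conj_mul' u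
      have h2 : u ^ k = u * u ^ (k - 1) := by
        rw [← pow_succ']; congr 1; omega
      have h3 : (‖u‖ : ℂ) ^ ((2 : ℤ) - (k : ℤ)) = (‖u‖ : ℂ) ^ 2 / (‖u‖ : ℂ) ^ k := by
        rw [zpow_sub₀ huc]; norm_cast
      push_cast
      rw [h3, mul_pow, mul_pow, div_pow, h2, ← h1]
      ring
    rw [hkey, Complex.re_ofReal_mul]
    have : 2 * (r ^ k * ‖u‖ ^ ((2 : ℤ) - (k : ℤ)) * (u ^ (k - 1) * e ^ k).re)
        = -(r ^ k * (cPar p k z * ‖u‖ ^ ((2 : ℤ) - (k : ℤ)))) := by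
      linear_combination (r ^ k * ‖u‖ ^ ((2 : ℤ) - (k : ℤ))) * hdir
    rw [this, ← hC]
    apply le_of_eq
    rw [pow_succ, hr]; ring

/-- The RNM orbit of a seed `z₀` remains in `S₀ = {z : |p(z)| ≤ |p(z₀)|}`; in fact
`|p(z_{t+1})| ≤ |p(z_t)|` for every `t ≥ 0`, with strict inequality whenever `p(z_t) ≠ 0`. -/
theorem rnm_orbit_monotone (p : Polynomial ℂ) (hdeg : 2 ≤ p.natDegree) (z₀ : ℂ) :
    (∀ t : ℕ, rnmOrbit p z₀ t ∈ {z : ℂ | ‖p.eval z‖ ≤ ‖p.eval z₀‖}) ∧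
    (∀ t : ℕ, ‖p.eval (rnmOrbit p z₀ (t + 1))‖ ≤
        ‖p.eval (rnmOrbit p z₀ t)‖) ∧
    (∀ t : ℕ, p.eval (rnmOrbit p z₀ t) ≠ 0 →
        ‖p.eval (rnmOrbit p z₀ (t + 1))‖ <
          ‖p.eval (rnmOrbit p z₀ t)‖) := by
  have hs : ∀ t : ℕ, p.eval (rnmOrbit p z₀ t) ≠ 0 →
      ‖p.eval (rnmOrbit p z₀ (t + 1))‖ < ‖p.eval (rnmOrbit p z₀ t)‖ := by
    intro t ht
    rw [rnmOrbit, if_neg ht]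
    exact rnm_step p hdeg _ ht
  have hm : ∀ t : ℕ, ‖p.eval (rnmOrbit p z₀ (t + 1))‖ ≤ ‖p.eval (rnmOrbit p z₀ t)‖ := by
    intro t
    by_cases ht : p.eval (rnmOrbit p z₀ t) = 0
    · rw [rnmOrbit, if_pos ht]
    · exact (hs t ht).le
  refine ⟨fun t => ?_, hm, hs⟩
  induction t with
  | zero => exact le_refl ‖p.eval z₀‖
  | succ t ih => exact le_trans (hm t) ih
end
end

section
/- Basins of attraction of RNM contain discs: Let p be a polynomial with complex coefficients of degree n ≥ 2 and let θ* ∈ ℂ be a root of p. Then there exists ρ > 0 such that for every seed z₀ with |z₀ − θ*| < ρ, the RNM orbit of z₀ converges to θ*; that is, the RNM basin of attraction of θ* contains an open disc centered at θ*. -/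
open Polynomial Filter Topology
open scoped Classical

noncomputable section

lemma RN_eq (p : Polynomial ℂ) (z : ℂ) (h1 : p.derivative.eval z ≠ 0) (h0 : p.eval z ≠ 0) :
    RN p z = z - ((1 / (9 * (Amax p z) ^ 2) : ℝ) : ℂ) *
      (p.eval z * (starRingEnd ℂ) (p.derivative.eval z)) := by
  have hd : dEval p 1 z = p.derivative.eval z := by simp [dEval]
  have hk : kIndex p z = 1 := by
    unfold kIndex
    have hm : (1 : ℕ) ∈ {j : ℕ | 1 ≤ j ∧ dEval p j z ≠ 0} := ⟨le_refl _, by rw [hd]; exact h1⟩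
    exact le_antisymm (Nat.sInf_le hm) (Nat.sInf_mem ⟨1, hm⟩).1
  have hu : uPar p 1 z = p.eval z * (starRingEnd ℂ) (p.derivative.eval z) := by
    simp [uPar, hd]
  have hg : gammaPar p 1 z = 2 := by simp [gammaPar]
  have hdl : deltaPar p 1 z = 0 := by simp [deltaPar]
  have hc : cPar p 1 z = 2 := by simp [cPar, hg, hdl]
  have ht : thetaPar p 1 z = Real.pi := by simp [thetaPar, hg, hc]
  have hune : uPar p 1 z ≠ 0 := by
    rw [hu]; exact mul_ne_zero h0 (by simpa using h1)
  have hun : ((‖uPar p 1 z‖ : ℝ) : ℂ) ≠ 0 := by simpa using hune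
  have hC : CPar p 1 z = 2 * ‖uPar p 1 z‖ / (6 * (Amax p z) ^ 2) := by
    simp [CPar, hc]
  unfold RN rniWith
  rw [hk, ht, hC, Complex.exp_pi_mul_I, ← hu]
  generalize uPar p 1 z = u at *
  by_cases hA : (Amax p z : ℂ) = 0
  · push_cast
    simp [hA]
  · push_cast
    field_simp
    ring

lemma Amax_cont (p : Polynomial ℂ) : Continuous (Amax p) := by
  unfold Amax
  apply Continuous.finset_sup'_apply
  intro j _
  unfold dEval
  fun_prop

lemma Amax_ge (p : Polynomial ℂ) (h : 1 ≤ p.natDegree) (z : ℂ) :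
    ‖p.derivative.eval z‖ ≤ Amax p z := by
  have := Finset.le_sup' (s := Finset.range (p.natDegree + 1))
    (fun j => ‖dEval p j z‖ / (Nat.factorial j)) (b := 1) (by simp; omega)
  have h2 : ‖dEval p 1 z‖ / (Nat.factorial 1 : ℝ) ≤ Amax p z := this
  simpa [dEval] using h2

lemma step (p q : Polynomial ℂ) (hdeg : 2 ≤ p.natDegree) (θ z : ℂ) (k : ℕ)
    (hp : p = (X - C θ) ^ (k + 1) * q) (M c : ℝ) (hc : 0 < c) (hz : z ≠ θ)
    (h : ℂ) (hh : h = q.eval z * (starRingEnd ℂ) ((k + 1) * q.eval z +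
      (z - θ) * q.derivative.eval z))
    (h1 : ‖q.eval z‖ ^ 2 / 9 ≤ h.re) (h2 : c ≤ h.re) (h3 : Amax p z ≤ M) :
    p.eval z ≠ 0 ∧ ‖RN p z - θ‖ ^ 2 ≤
      ‖z - θ‖ ^ 2 - c / (9 * M ^ 2) * (‖z - θ‖ ^ 2) ^ (k + 1) := by
  have hw : z - θ ≠ 0 := sub_ne_zero.2 hz
  have hpe : p.eval z = (z - θ) ^ (k + 1) * q.eval z := by simp [hp]
  have hpd : p.derivative.eval z = (z - θ) ^ k * ((k + 1) * q.eval z +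
      (z - θ) * q.derivative.eval z) := by
    rw [hp]; simp [derivative_mul, derivative_X_sub_C_pow]; ring
  have hne : h ≠ 0 := by
    rintro rfl
    simp at h2; linarith
  have hq : q.eval z ≠ 0 := by
    intro h0; exact hne (by rw [hh, h0]; simp)
  have hr : ((k + 1) * q.eval z + (z - θ) * q.derivative.eval z) ≠ 0 := by
    intro h0; exact hne (by rw [hh, h0]; simp)
  have hp0 : p.eval z ≠ 0 := by rw [hpe]; exact mul_ne_zero (pow_ne_zero _ hw) hq
  have hd0 : p.derivative.eval z ≠ 0 := by rw [hpd]; exact mul_ne_zero (pow_ne_zero _ hw) hr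
  refine ⟨hp0, ?_⟩
  have hAge := Amax_ge p (by omega) z
  have hApos : 0 < Amax p z := lt_of_lt_of_le (norm_pos_iff.2 hd0) hAge
  rw [RN_eq p z hd0 hp0]
  set A := Amax p z with hA
  set w := z - θ with hwdef
  set a : ℝ := (‖w‖ ^ 2) ^ k with ha
  have hapos : 0 < a := by positivity
  have hu : p.eval z * (starRingEnd ℂ) (p.derivative.eval z) = w * ((a : ℝ) : ℂ) * h := by
    rw [hpe, hpd, hh, ha]
    have : (((‖w‖ ^ 2) ^ k : ℝ) : ℂ) = w ^ k * (starRingEnd ℂ) w ^ k := by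
      rw [← mul_pow, Complex.mul_conj, Complex.normSq_eq_norm_sq]; push_cast; rfl
    rw [this, map_mul, map_pow]; ring
  have hfac : z - ((1 / (9 * A ^ 2) : ℝ) : ℂ) * (p.eval z * (starRingEnd ℂ) (p.derivative.eval z)) - θ
      = w * (1 - ((1 / (9 * A ^ 2) * a : ℝ) : ℂ) * h) := by
    rw [hu, hwdef]; push_cast; ring
  have hah : a * ‖h‖ ^ 2 ≤ A ^ 2 * ‖q.eval z‖ ^ 2 := by
    have : a * ‖h‖ ^ 2 = ‖p.derivative.eval z‖ ^ 2 * ‖q.eval z‖ ^ 2 := by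
      rw [hh, hpd, norm_mul, RCLike.norm_conj, norm_mul, norm_pow, ha]; ring
    rw [this]; gcongr
  have hsq : ∀ b : ℝ, ‖1 - (b : ℂ) * h‖ ^ 2 = 1 - 2 * b * h.re + b ^ 2 * ‖h‖ ^ 2 := by
    intro b
    rw [← Complex.normSq_eq_norm_sq, ← Complex.normSq_eq_norm_sq, Complex.normSq_apply,
      Complex.normSq_apply]
    simp; ring
  rw [hfac, norm_mul, mul_pow, hsq]
  set B := 1 / (9 * A ^ 2) with hB
  have hBpos : 0 < B := by positivity
  have hM : 1 / (9 * M ^ 2) ≤ B := by rw [hB]; gcongr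
  have e1 : (B * a) ^ 2 * ‖h‖ ^ 2 ≤ B * a * h.re := by
    calc (B * a) ^ 2 * ‖h‖ ^ 2 = B * a * (B * (a * ‖h‖ ^ 2)) := by ring
      _ ≤ B * a * (B * (A ^ 2 * ‖q.eval z‖ ^ 2)) := by gcongr
      _ = B * a * (‖q.eval z‖ ^ 2 / 9) := by rw [hB]; field_simp
      _ ≤ _ := by gcongr
  have e2 : 1 / (9 * M ^ 2) * a * c ≤ B * a * h.re := by gcongr
  have e3 : c / (9 * M ^ 2) * (‖w‖ ^ 2) ^ (k + 1) = ‖w‖ ^ 2 * (1 / (9 * M ^ 2) * a * c) := by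
    rw [ha]; ring
  rw [e3]
  nlinarith [mul_le_mul_of_nonneg_left (add_le_add e1 e2) (sq_nonneg ‖w‖)]

lemma seq_lim (x : ℕ → ℝ) (c : ℝ) (hc : 0 < c) (k : ℕ) (h0 : ∀ t, 0 ≤ x t)
    (h : ∀ t, x (t + 1) ≤ x t - c * x t ^ (k + 1)) : Tendsto x atTop (𝓝 0) := by
  have hanti : Antitone x := antitone_nat_of_succ_le fun t => by
    have := h t; have := mul_nonneg hc.le (pow_nonneg (h0 t) (k + 1)); linarith
  have hb : BddBelow (Set.range x) := ⟨0, by rintro _ ⟨t, rfl⟩; exact h0 t⟩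
  have hl := tendsto_atTop_ciInf hanti hb
  set L := ⨅ i, x i
  have hL0 : 0 ≤ L := ge_of_tendsto' hl h0
  have h1 : L ≤ L - c * L ^ (k + 1) :=
    le_of_tendsto_of_tendsto' (hl.comp (tendsto_add_atTop_nat 1))
      (hl.sub ((hl.pow (k + 1)).const_mul c)) h
  have : L = 0 := by
    by_contra hne
    have : 0 < L := lt_of_le_of_ne hL0 (Ne.symm hne)
    have : 0 < c * L ^ (k + 1) := by positivity
    linarith
  rwa [this] at hl

/-- **Basins of attraction of RNM contain discs.** For every root `θ*` of `p` there exists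
`ρ > 0` such that the RNM orbit of every seed `z₀` with `|z₀ − θ*| < ρ` converges to `θ*`. -/
theorem rnm_basin_contains_disc (p : Polynomial ℂ) (hdeg : 2 ≤ p.natDegree)
    (θstar : ℂ) (hroot : p.eval θstar = 0) :
    ∃ ρ : ℝ, 0 < ρ ∧ ∀ z₀ : ℂ, ‖z₀ - θstar‖ < ρ →
      Filter.Tendsto (rnmOrbit p z₀) Filter.atTop (nhds θstar) := by
  have hpne : p ≠ 0 := by rintro rfl; simp at hdeg
  obtain ⟨q, hpq, hnd⟩ := exists_eq_pow_rootMultiplicity_mul_and_not_dvd p hpne θstar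
  have hq : q.eval θstar ≠ 0 := fun h => hnd (dvd_iff_isRoot.2 h)
  have hm : 0 < p.rootMultiplicity θstar := (rootMultiplicity_pos hpne).2 hroot
  obtain ⟨k, hk⟩ : ∃ k, p.rootMultiplicity θstar = k + 1 := ⟨_, (Nat.succ_pred_eq_of_pos hm).symm⟩
  rw [hk] at hpq
  set h : ℂ → ℂ := fun z => q.eval z * (starRingEnd ℂ) ((k + 1) * q.eval z +
      (z - θstar) * q.derivative.eval z) with hh
  have hcont : Continuous fun z => (h z).re := by
    apply Complex.continuous_re.comp
    rw [hh]
    exact q.continuous.mul (Complex.continuous_conj.comp (by fun_prop))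
  have hqpos : 0 < ‖q.eval θstar‖ ^ 2 := by positivity
  have hθ : (h θstar).re = (k + 1) * ‖q.eval θstar‖ ^ 2 := by
    have : h θstar = (((k + 1) * ‖q.eval θstar‖ ^ 2 : ℝ) : ℂ) := by
      simp only [hh, sub_self, zero_mul, add_zero, map_mul]
      push_cast
      rw [← Complex.mul_conj']
      simp; ring
    rw [this, Complex.ofReal_re]
  have hθge : ‖q.eval θstar‖ ^ 2 ≤ (h θstar).re := by
    rw [hθ]; nlinarith [(Nat.cast_nonneg k : (0 : ℝ) ≤ k)]
  set c := ‖q.eval θstar‖ ^ 2 / 2 with hcdef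
  have hc : 0 < c := by positivity
  set M := Amax p θstar + 1 with hMdef
  have hMpos : 0 < M := by
    have := Amax_ge p (by omega) θstar
    have := norm_nonneg (p.derivative.eval θstar)
    linarith
  have E1 : ∀ᶠ z in 𝓝 θstar, ‖q.eval z‖ ^ 2 / 9 < (h z).re :=
    ContinuousAt.eventually_lt (f := fun z => ‖q.eval z‖ ^ 2 / 9)
      (by fun_prop) hcont.continuousAt (by linarith)
  have E2 : ∀ᶠ z in 𝓝 θstar, c < (h z).re :=
    hcont.continuousAt.eventually_const_lt (by rw [hcdef]; linarith)
  have E3 : ∀ᶠ z in 𝓝 θstar, Amax p z < M :=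
    (Amax_cont p).continuousAt.eventually_lt_const (by rw [hMdef]; linarith)
  obtain ⟨ρ, hρ, hball⟩ := Metric.eventually_nhds_iff.1 (E1.and (E2.and E3))
  have hc' : 0 < c / (9 * M ^ 2) := by positivity
  refine ⟨ρ, hρ, fun z₀ hz₀ => ?_⟩
  have key : ∀ t, ‖rnmOrbit p z₀ t - θstar‖ < ρ → ‖rnmOrbit p z₀ (t + 1) - θstar‖ ^ 2 ≤
      ‖rnmOrbit p z₀ t - θstar‖ ^ 2 -
        c / (9 * M ^ 2) * (‖rnmOrbit p z₀ t - θstar‖ ^ 2) ^ (k + 1) := by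
    intro t ht
    by_cases hz : rnmOrbit p z₀ t = θstar
    · have : rnmOrbit p z₀ (t + 1) = θstar := by
        simp [rnmOrbit, hz, hroot]
      simp [this, hz]
    · obtain ⟨a1, a2, a3⟩ := hball (y := rnmOrbit p z₀ t) (by rwa [dist_eq_norm])
      obtain ⟨s1, s2⟩ := step p q hdeg θstar _ k hpq M c hc hz _ rfl a1.le a2.le a3.le
      rw [rnmOrbit, if_neg s1]
      exact s2
  have hin : ∀ t, ‖rnmOrbit p z₀ t - θstar‖ < ρ := by
    intro t
    induction t with
    | zero => exact hz₀
    | succ t ih =>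
      refine lt_of_le_of_lt ?_ ih
      apply (pow_le_pow_iff_left₀ (norm_nonneg _) (norm_nonneg _) two_ne_zero).1
      have := key t ih
      have : 0 ≤ c / (9 * M ^ 2) * (‖rnmOrbit p z₀ t - θstar‖ ^ 2) ^ (k + 1) := by positivity
      linarith
  have hlim := seq_lim (fun t => ‖rnmOrbit p z₀ t - θstar‖ ^ 2) _ hc' k (fun t => by positivity)
    (fun t => key t (hin t))
  rw [tendsto_iff_norm_sub_tendsto_zero]
  have := hlim.sqrt
  simpa [Real.sqrt_sq] using this
end
end

section
/- Decrement bound via H: Let p be a polynomial with complex coefficients of degree n ≥ 2, F(z) = |p(z)|², and let z₀ ∈ ℂ with p(z₀) ≠ 0. With k = k(z₀), A = A(z₀), C_k the Robust Newton parameters at z₀ and z₁ = N̂_p(z₀) the Robust Newton iterate, one has F(z₁) − F(z₀) ≤ 6·A²·H_{C_k}(C_k/3), where H_C(x) = −C·x^k + x^(k+1)/(1−x). -/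
open Polynomial Filter Topology
open scoped Classical

noncomputable section

lemma aux_geom (a : ℕ → ℂ) (A r : ℝ) (hA : ∀ j, ‖a j‖ ≤ A) (h : ℂ) (hr : ‖h‖ = r) (hr0 : 0 ≤ r)
    (hr1 : r < 1) (m N : ℕ) :
    ‖∑ i ∈ Finset.range N, a (m + i) * h ^ (m + i)‖ ≤ A * r ^ m / (1 - r) := by
  have hA0 : 0 ≤ A := (norm_nonneg _).trans (hA 0)
  calc _ ≤ ∑ i ∈ Finset.range N, (A * r ^ m) * r ^ i := by
        refine (norm_sum_le _ _).trans (Finset.sum_le_sum fun i _ => ?_)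
        rw [norm_mul, norm_pow, hr, pow_add, mul_assoc]
        exact mul_le_mul_of_nonneg_right (hA _) (by positivity)
    _ = (A * r ^ m) * ∑ i ∈ Finset.range N, r ^ i := by rw [Finset.mul_sum]
    _ ≤ (A * r ^ m) * (1 / (1 - r)) := by
        refine mul_le_mul_of_nonneg_left ?_ (by positivity)
        rw [geom_sum_eq (by linarith), ← neg_div_neg_eq]
        have : 0 ≤ r ^ N := by positivity
        have h1 : 0 < 1 - r := by linarith
        rw [neg_sub, neg_sub]
        gcongr
        linarith
    _ = _ := by ring

lemma aux_coeff (p : Polynomial ℂ) (z : ℂ) (j : ℕ) :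
    (taylor z p).coeff j = dEval p j z / (Nat.factorial j : ℂ) := by
  have hf : (Nat.factorial j : ℂ) ≠ 0 := by exact_mod_cast Nat.factorial_ne_zero j
  rw [taylor_coeff, eq_div_iff hf, dEval, ← Polynomial.factorial_smul_hasseDeriv]
  simp [mul_comm]

lemma aux_le_A (p : Polynomial ℂ) (z : ℂ) (j : ℕ) : ‖(taylor z p).coeff j‖ ≤ Amax p z := by
  have key : ∀ j, j ≤ p.natDegree → ‖(taylor z p).coeff j‖ ≤ Amax p z := by
    intro j hj
    rw [aux_coeff, norm_div, Complex.norm_natCast]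
    exact Finset.le_sup' (fun j => ‖dEval p j z‖ / (Nat.factorial j))
      (Finset.mem_range.2 (by omega))
  by_cases hj : j ≤ p.natDegree
  · exact key j hj
  · rw [coeff_eq_zero_of_natDegree_lt (by rw [natDegree_taylor]; omega), norm_zero]
    exact (norm_nonneg _).trans (key 0 (Nat.zero_le _))

lemma aux_k (p : Polynomial ℂ) (hdeg : 2 ≤ p.natDegree) (z : ℂ) :
    1 ≤ kIndex p z ∧ dEval p (kIndex p z) z ≠ 0 := by
  have hne : {j : ℕ | 1 ≤ j ∧ dEval p j z ≠ 0}.Nonempty := by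
    refine ⟨p.natDegree, by omega, fun h => ?_⟩
    have h1 := aux_coeff p z p.natDegree
    rw [h, zero_div] at h1
    have h2 : (taylor z p).leadingCoeff = 0 := by
      rw [leadingCoeff, natDegree_taylor, h1]
    rw [leadingCoeff_eq_zero, taylor_eq_zero] at h2
    simp [h2] at hdeg
  exact Nat.sInf_mem hne

lemma aux_lt_k (p : Polynomial ℂ) (z : ℂ) (j : ℕ) (h1 : 1 ≤ j) (h2 : j < kIndex p z) :
    (taylor z p).coeff j = 0 := by
  have := Nat.notMem_of_lt_sInf h2
  simp only [Set.mem_ofPred_eq, not_and, not_not] at this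
  rw [aux_coeff, this h1, zero_div]

lemma aux_u (p : Polynomial ℂ) (z : ℂ) (k : ℕ) :
    uPar p k z = (taylor z p).coeff 0 * (starRingEnd ℂ) ((taylor z p).coeff k) := by
  rw [aux_coeff p z k, taylor_coeff_zero, uPar]
  simp only [map_div₀, Complex.conj_natCast]
  ring

lemma aux_theta (p : Polynomial ℂ) (z : ℂ) (k : ℕ) (hk : 1 ≤ k) :
    2 * ((uPar p k z) ^ (k - 1) * Complex.exp ((thetaPar p k z : ℂ) * Complex.I) ^ k).re
      = - cPar p k z := by
  have hk0 : (k : ℂ) ≠ 0 := by exact_mod_cast (by omega : k ≠ 0)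
  rw [← Complex.exp_nat_mul]
  have hg : gammaPar p k z = 2 * ((uPar p k z) ^ (k - 1)).re := rfl
  have hd : deltaPar p k z = -2 * ((uPar p k z) ^ (k - 1)).im := rfl
  unfold thetaPar
  split_ifs with h1 h2 h2
  · rw [h1, abs_of_neg h2, hg]; simp
  · rw [h1, abs_of_nonneg (not_lt.1 h2), hg]
    have : (k : ℂ) * (((Real.pi / k : ℝ) : ℂ) * Complex.I) = Real.pi * Complex.I := by
      push_cast; field_simp
    rw [this, Complex.exp_pi_mul_I]; simp
  · have hc : cPar p k z = |deltaPar p k z| := by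
      unfold cPar at *
      rcases max_choice |gammaPar p k z| |deltaPar p k z| with h | h
      · exact absurd h h1
      · exact h
    rw [hc, abs_of_neg h2, hd]
    have : (k : ℂ) * (((Real.pi / (2 * k) : ℝ) : ℂ) * Complex.I) = Real.pi / 2 * Complex.I := by
      push_cast; field_simp
    rw [this, Complex.exp_pi_div_two_mul_I]; simp
  · have hc : cPar p k z = |deltaPar p k z| := by
      unfold cPar at *
      rcases max_choice |gammaPar p k z| |deltaPar p k z| with h | h
      · exact absurd h h1
      · exact h
    rw [hc, abs_of_nonneg (not_lt.1 h2), hd]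
    have : (k : ℂ) * (((3 * Real.pi / (2 * k) : ℝ) : ℂ) * Complex.I)
        = Real.pi * Complex.I + Real.pi / 2 * Complex.I := by
      push_cast; field_simp; ring
    rw [this, Complex.exp_add, Complex.exp_pi_mul_I, Complex.exp_pi_div_two_mul_I]; simp

lemma aux_c_le (p : Polynomial ℂ) (z : ℂ) (k : ℕ) :
    cPar p k z ≤ 2 * ‖uPar p k z‖ ^ (k - 1) := by
  unfold cPar gammaPar deltaPar
  rw [← norm_pow, abs_mul, abs_mul]
  have h1 := Complex.abs_re_le_norm (uPar p k z ^ (k - 1))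
  have h2 := Complex.abs_im_le_norm (uPar p k z ^ (k - 1))
  rw [abs_neg, abs_two]
  exact max_le (by linarith) (by linarith)

lemma aux_expand (a w R : ℂ) :
    ‖a + w + R‖ ^ 2 = ‖a‖ ^ 2 + 2 * ((starRingEnd ℂ) a * w).re + 2 * ((starRingEnd ℂ) a * R).re
      + ‖w + R‖ ^ 2 := by
  simp only [← Complex.normSq_eq_norm_sq, Complex.normSq_apply, Complex.add_re, Complex.add_im,
    Complex.mul_re, Complex.conj_re, Complex.conj_im]
  ring

theorem decrement_bound_via_H (p : Polynomial ℂ) (hdeg : 2 ≤ p.natDegree)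
    (z₀ : ℂ) (hp : p.eval z₀ ≠ 0) :
    ‖p.eval (RN p z₀)‖ ^ 2 - ‖p.eval z₀‖ ^ 2 ≤
      6 * (Amax p z₀) ^ 2 *
        (-(CPar p (kIndex p z₀) z₀) * (CPar p (kIndex p z₀) z₀ / 3) ^ (kIndex p z₀) +
          (CPar p (kIndex p z₀) z₀ / 3) ^ (kIndex p z₀ + 1) /
            (1 - CPar p (kIndex p z₀) z₀ / 3)) := by
  obtain ⟨hk1, hkne⟩ := aux_k p hdeg z₀
  have hlt := aux_lt_k p z₀
  unfold RN rniWith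
  generalize kIndex p z₀ = k at *
  have ha0 : (taylor z₀ p).coeff 0 = p.eval z₀ := taylor_coeff_zero _ _
  have hA := aux_le_A p z₀
  have hu := aux_u p z₀ k
  have hth := aux_theta p z₀ k hk1
  have hcle := aux_c_le p z₀ k
  have hc0 : 0 ≤ cPar p k z₀ := le_max_of_le_left (abs_nonneg _)
  have hak : (taylor z₀ p).coeff k ≠ 0 := by
    rw [aux_coeff]; exact div_ne_zero hkne (by exact_mod_cast Nat.factorial_ne_zero k)
  have hAp : 0 < Amax p z₀ := (norm_pos_iff.2 hak).trans_le (hA k)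
  have hune : uPar p k z₀ ≠ 0 := by
    rw [hu, ha0]; exact mul_ne_zero hp (by simpa using hak)
  have hun : ‖uPar p k z₀‖ ≤ Amax p z₀ ^ 2 := by
    rw [hu, norm_mul, RCLike.norm_conj, sq]
    exact mul_le_mul (hA 0) (hA k) (norm_nonneg _) hAp.le
  have hup : 0 < ‖uPar p k z₀‖ := norm_pos_iff.2 hune
  have hCdef : CPar p k z₀ * (6 * Amax p z₀ ^ 2)
      = cPar p k z₀ * ‖uPar p k z₀‖ ^ ((2 : ℤ) - (k : ℤ)) := by
    unfold CPar; field_simp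
  have hC0 : 0 ≤ CPar p k z₀ := by unfold CPar; positivity
  have hC3 : CPar p k z₀ ≤ 1 / 3 := by
    have h1 : cPar p k z₀ * ‖uPar p k z₀‖ ^ ((2 : ℤ) - (k : ℤ)) ≤ 2 * ‖uPar p k z₀‖ := by
      refine (mul_le_mul_of_nonneg_right hcle (by positivity)).trans_eq ?_
      rw [mul_assoc, ← zpow_natCast, ← zpow_add₀ hup.ne']
      have : ((k - 1 : ℕ) : ℤ) + (2 - k) = 1 := by omega
      rw [this, zpow_one]
    have h2 : 0 < Amax p z₀ ^ 2 := by positivity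
    by_contra hcon
    push Not at hcon
    nlinarith
  set r : ℝ := CPar p k z₀ / 3 with hrdef
  have hr0 : 0 ≤ r := by positivity
  have hr9 : r ≤ 1 / 9 := by rw [hrdef]; linarith
  set u := uPar p k z₀ with hudef
  set A := Amax p z₀ with hAdef
  set E := Complex.exp ((thetaPar p k z₀ : ℂ) * Complex.I) with hE
  set h : ℂ := (r : ℂ) * (u / (‖u‖ : ℂ)) * E with hh
  have hhn : ‖h‖ = r := by
    rw [hh, norm_mul, norm_mul, hE, Complex.norm_exp_ofReal_mul_I, norm_div, Complex.norm_real,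
      Complex.norm_real, norm_norm, div_self hup.ne', Real.norm_of_nonneg hr0]; ring
  set a := (taylor z₀ p).coeff with hadef
  set R : ℂ := ∑ i ∈ Finset.range p.natDegree, a (k + 1 + i) * h ^ (k + 1 + i) with hR
  have hev : p.eval (z₀ + h) = a 0 + a k * h ^ k + R := by
    have h1 : p.eval (z₀ + h) = (taylor z₀ p).eval h := by
      rw [taylor_eval, add_comm]
    rw [h1, eval_eq_sum_range' (n := k + 1 + p.natDegree) (by rw [natDegree_taylor]; omega),
      Finset.sum_range_add, Finset.sum_range_succ]
    congr 2
    rw [Finset.sum_eq_single_of_mem 0 (Finset.mem_range.2 hk1)]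
    · simp [hadef]
    · intro j hj hj0
      exact mul_eq_zero_of_left (hlt j (by omega) (Finset.mem_range.1 hj)) _
  have hRn : ‖R‖ ≤ A * r ^ (k + 1) / (1 - r) :=
    aux_geom a A r hA h hhn hr0 (by linarith) (k + 1) _
  have hSn : ‖a k * h ^ k + R‖ ≤ A * r ^ k / (1 - r) := by
    have := aux_geom a A r hA h hhn hr0 (by linarith) k (p.natDegree + 1)
    rw [Finset.sum_range_succ', add_zero] at this
    rw [add_comm]
    convert this using 3
    rw [hR]
    refine Finset.sum_congr rfl fun i _ => ?_
    rw [show k + (i + 1) = k + 1 + i by ring]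
  have hlead : 2 * ((starRingEnd ℂ) (a 0) * (a k * h ^ k)).re
      = - (CPar p k z₀ * (6 * A ^ 2)) * r ^ k := by
    have hcu : (starRingEnd ℂ) (a 0) * a k = (starRingEnd ℂ) u := by
      rw [hu]; simp
    have huc : (‖u‖ : ℂ) ≠ 0 := by exact_mod_cast hup.ne'
    have e1 : (starRingEnd ℂ) (a 0) * (a k * h ^ k)
        = ((r ^ k * ‖u‖ ^ ((2 : ℤ) - (k : ℤ)) : ℝ) : ℂ) * (u ^ (k - 1) * E ^ k) := by
      rw [← mul_assoc, hcu, hh, mul_pow, mul_pow, div_pow]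
      have e2 : u ^ k = u * u ^ (k - 1) := by rw [← pow_succ']; congr 1; omega
      rw [e2]
      have e3 : (starRingEnd ℂ) u * u = (‖u‖ : ℂ) ^ 2 := by
        rw [mul_comm, Complex.mul_conj, Complex.normSq_eq_norm_sq]; push_cast; ring
      push_cast
      rw [zpow_sub₀ huc, zpow_natCast]
      have e4 : ((‖u‖ : ℂ) ^ (2 : ℤ)) = (‖u‖ : ℂ) ^ 2 := by norm_cast
      rw [e4, ← e3]
      ring
    rw [e1, Complex.re_ofReal_mul, hCdef]
    linear_combination (r ^ k * ‖u‖ ^ ((2 : ℤ) - (k : ℤ))) * hth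
  have hcross : ((starRingEnd ℂ) (a 0) * R).re ≤ A * (A * r ^ (k + 1) / (1 - r)) := by
    refine (Complex.re_le_norm _).trans ?_
    rw [norm_mul, RCLike.norm_conj]
    exact mul_le_mul (hA 0) hRn (norm_nonneg _) hAp.le
  have h1r : 0 < 1 - r := by linarith
  have hsq : ‖a k * h ^ k + R‖ ^ 2 ≤ 4 * A ^ 2 * (r ^ (k + 1) / (1 - r)) := by
    refine (pow_le_pow_left₀ (norm_nonneg _) hSn 2).trans ?_
    obtain ⟨m, rfl⟩ : ∃ m, k = m + 1 := ⟨k - 1, by omega⟩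
    have hrm : r ^ m ≤ 1 := pow_le_one₀ hr0 (by linarith)
    have hq : r ^ m / (1 - r) ≤ 4 := by
      rw [div_le_iff₀ h1r]; linarith
    have : (A * r ^ (m + 1) / (1 - r)) ^ 2
        = A ^ 2 * (r ^ (m + 1 + 1) / (1 - r)) * (r ^ m / (1 - r)) := by
      field_simp; ring
    rw [this]
    have hnn : 0 ≤ A ^ 2 * (r ^ (m + 1 + 1) / (1 - r)) := by positivity
    nlinarith
  rw [hev, ← ha0, aux_expand, hlead]
  have e5 : A * (A * r ^ (k + 1) / (1 - r)) = A ^ 2 * (r ^ (k + 1) / (1 - r)) := by ring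
  rw [e5] at hcross
  linarith
end
end

section
/- RNM on the imaginary axis for z² − 1: Let p(z) = z² − 1 and let z₀ = εi with ε real, ε > 0. Then the Robust Newton iterate is N̂_p(z₀) = εi − 2εi/(9(1 + ε²)); consequently the RNM orbit of z₀ remains on the positive imaginary axis, its imaginary parts form a strictly decreasing positive sequence, and the orbit converges monotonically to the critical point 0. -/
open Polynomial Filter Topology
open scoped Classical

noncomputable section

theorem aux_d1 (z : ℂ) : dEval (X ^ 2 - 1 : Polynomial ℂ) 1 z = 2 * z := by
  simp [dEval]
  left
  norm_num

theorem aux_k_s19 (x : ℝ) (hx : 0 < x) :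
    kIndex (X ^ 2 - 1 : Polynomial ℂ) ((x : ℂ) * Complex.I) = 1 := by
  have hm : (1 : ℕ) ∈ {j : ℕ | 1 ≤ j ∧ dEval (X ^ 2 - 1 : Polynomial ℂ) j
      ((x : ℂ) * Complex.I) ≠ 0} := by
    refine ⟨le_refl _, ?_⟩
    rw [aux_d1]
    simp [hx.ne']
  unfold kIndex
  apply le_antisymm (Nat.sInf_le hm)
  exact (Nat.sInf_mem ⟨1, hm⟩).1

theorem aux_ev (x : ℝ) : (X ^ 2 - 1 : Polynomial ℂ).eval ((x : ℂ) * Complex.I)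
    = ((-(1 + x ^ 2) : ℝ) : ℂ) := by
  simp [mul_pow]
  ring

theorem aux_A (x : ℝ) (hx : 0 < x) :
    Amax (X ^ 2 - 1 : Polynomial ℂ) ((x : ℂ) * Complex.I) = 1 + x ^ 2 := by
  have hd : (X ^ 2 - 1 : Polynomial ℂ).natDegree = 2 := by
    have := natDegree_X_pow_sub_C (R := ℂ) (n := 2) (r := 1)
    simpa using this
  have h0 : ‖dEval (X ^ 2 - 1 : Polynomial ℂ) 0 ((x : ℂ) * Complex.I)‖ = 1 + x ^ 2 := by
    have : dEval (X ^ 2 - 1 : Polynomial ℂ) 0 ((x : ℂ) * Complex.I)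
      = ((-(1 + x ^ 2) : ℝ) : ℂ) := aux_ev x
    rw [this, Complex.norm_real, Real.norm_eq_abs, abs_neg, abs_of_pos (by positivity)]
  have h1 : ‖dEval (X ^ 2 - 1 : Polynomial ℂ) 1 ((x : ℂ) * Complex.I)‖ = 2 * x := by
    rw [aux_d1]
    simp [abs_of_pos hx]
  have h2 : ‖dEval (X ^ 2 - 1 : Polynomial ℂ) 2 ((x : ℂ) * Complex.I)‖ = 2 := by
    simp [dEval]
    rw [one_add_one_eq_two]
    simp
  unfold Amax
  apply le_antisymm
  · apply Finset.sup'_le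
    intro j hj
    rw [hd, Finset.mem_range] at hj
    interval_cases j
    · rw [h0]; simp
    · rw [h1]; simp; nlinarith [sq_nonneg (x - 1)]
    · rw [h2]; simp; positivity
  · refine le_trans ?_ (Finset.le_sup' _ (b := 0) (by simp))
    rw [h0]; simp

theorem aux_RN (x : ℝ) (hx : 0 < x) :
    RN (X ^ 2 - 1 : Polynomial ℂ) ((x : ℂ) * Complex.I) =
      (x : ℂ) * Complex.I - ((2 * x / (9 * (1 + x ^ 2)) : ℝ) : ℂ) * Complex.I := by
  have hu : uPar (X ^ 2 - 1 : Polynomial ℂ) 1 ((x : ℂ) * Complex.I)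
      = ((2 * x * (1 + x ^ 2) : ℝ) : ℂ) * Complex.I := by
    have hc2 : (starRingEnd ℂ) 2 = 2 := Complex.conj_ofNat 2
    unfold uPar
    rw [aux_ev, aux_d1]
    simp [hc2]
    ring
  have hn : ‖uPar (X ^ 2 - 1 : Polynomial ℂ) 1 ((x : ℂ) * Complex.I)‖
      = 2 * x * (1 + x ^ 2) := by
    rw [hu, norm_mul, Complex.norm_I, mul_one, Complex.norm_real, Real.norm_eq_abs,
      abs_of_pos (by positivity)]
  have hg : gammaPar (X ^ 2 - 1 : Polynomial ℂ) 1 ((x : ℂ) * Complex.I) = 2 := by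
    simp [gammaPar]
  have hdl : deltaPar (X ^ 2 - 1 : Polynomial ℂ) 1 ((x : ℂ) * Complex.I) = 0 := by
    simp [deltaPar]
  have hc : cPar (X ^ 2 - 1 : Polynomial ℂ) 1 ((x : ℂ) * Complex.I) = 2 := by
    simp [cPar, hg, hdl]
  have ht : thetaPar (X ^ 2 - 1 : Polynomial ℂ) 1 ((x : ℂ) * Complex.I) = Real.pi := by
    simp [thetaPar, hc, hg]
  have hC : CPar (X ^ 2 - 1 : Polynomial ℂ) 1 ((x : ℂ) * Complex.I)
      = 2 * (2 * x * (1 + x ^ 2)) / (6 * (1 + x ^ 2) ^ 2) := by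
    unfold CPar
    rw [hc, hn, aux_A x hx]
    norm_num
  unfold RN
  rw [aux_k_s19 x hx]
  unfold rniWith
  rw [ht, hC, hn, hu, Complex.exp_pi_mul_I]
  have h1 : ((2 * x * (1 + x ^ 2) : ℝ) : ℂ) ≠ 0 := by
    exact_mod_cast (by positivity : (2 * x * (1 + x ^ 2) : ℝ) ≠ 0)
  have h2 : (2 * (2 * x * (1 + x ^ 2)) / (6 * (1 + x ^ 2) ^ 2) / 3 : ℝ)
      = 2 * x / (9 * (1 + x ^ 2)) := by
    field_simp
    norm_num
  rw [h2, mul_div_cancel_left₀ _ h1]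
  ring

theorem aux_orbit (ε : ℝ) (hε : 0 < ε) : ∃ y : ℕ → ℝ,
    (∀ t, rnmOrbit (X ^ 2 - 1 : Polynomial ℂ) ((ε : ℂ) * Complex.I) t
      = (y t : ℂ) * Complex.I) ∧ (∀ t, 0 < y t) ∧ y 0 = ε ∧
    ∀ t, y (t + 1) = y t - 2 * y t / (9 * (1 + y t ^ 2)) := by
  obtain ⟨y, hy0, hs⟩ : ∃ y : ℕ → ℝ, y 0 = ε ∧
      ∀ t, y (t + 1) = y t - 2 * y t / (9 * (1 + y t ^ 2)) :=
    ⟨fun t => Nat.rec ε (fun _ a => a - 2 * a / (9 * (1 + a ^ 2))) t, rfl, fun t => rfl⟩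
  have hp : ∀ t, 0 < y t := by
    intro t
    induction t with
    | zero => rw [hy0]; exact hε
    | succ t ih =>
      rw [hs, sub_pos, div_lt_iff₀ (by positivity)]
      nlinarith [pow_pos ih 3]
  refine ⟨y, ?_, hp, hy0, hs⟩
  intro t
  induction t with
  | zero => rw [hy0]; rfl
  | succ t ih =>
    have hne : ¬ (X ^ 2 - 1 : Polynomial ℂ).eval (((y t : ℝ) : ℂ) * Complex.I) = 0 := by
      rw [aux_ev, Complex.ofReal_eq_zero, neg_eq_zero]
      positivity
    rw [rnmOrbit, ih, if_neg hne, aux_RN _ (hp t), hs, Complex.ofReal_sub, sub_mul]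

/-- **RNM on the imaginary axis for `z² − 1`.** For `z₀ = εi` with `ε > 0`, the Robust
Newton iterate is `N̂_p(z₀) = εi − (2ε/(9(1 + ε²)))·i`; consequently the RNM orbit of `z₀`
remains on the positive imaginary axis, its imaginary parts form a strictly decreasing
(positive) sequence, and the orbit converges to the critical point `0`. -/
theorem rnm_imaginary_axis_quadratic (ε : ℝ) (hε : 0 < ε) :
    RN (X ^ 2 - 1 : Polynomial ℂ) ((ε : ℂ) * Complex.I) =
      (ε : ℂ) * Complex.I - ((2 * ε / (9 * (1 + ε ^ 2)) : ℝ) : ℂ) * Complex.I ∧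
    (∀ t : ℕ, ∃ δ : ℝ, 0 < δ ∧
      rnmOrbit (X ^ 2 - 1 : Polynomial ℂ) ((ε : ℂ) * Complex.I) t = (δ : ℂ) * Complex.I) ∧
    StrictAnti (fun t : ℕ =>
      (rnmOrbit (X ^ 2 - 1 : Polynomial ℂ) ((ε : ℂ) * Complex.I) t).im) ∧
    Filter.Tendsto (rnmOrbit (X ^ 2 - 1 : Polynomial ℂ) ((ε : ℂ) * Complex.I))
      Filter.atTop (nhds 0) := by
  obtain ⟨y, hy, hp, h0, hs⟩ := aux_orbit ε hε
  have hlt : ∀ t, y (t + 1) < y t := by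
    intro t
    have := hp t
    rw [hs]
    have : 0 < 2 * y t / (9 * (1 + y t ^ 2)) := by positivity
    linarith
  have hanti : StrictAnti y := strictAnti_nat_of_succ_lt hlt
  refine ⟨aux_RN ε hε, fun t => ⟨y t, hp t, hy t⟩, ?_, ?_⟩
  · have : (fun t : ℕ =>
      (rnmOrbit (X ^ 2 - 1 : Polynomial ℂ) ((ε : ℂ) * Complex.I) t).im) = y := by
      funext t
      simp [hy t]
    rw [this]
    exact hanti
  · set q : ℝ := 1 - 2 / (9 * (1 + ε ^ 2)) with hq
    have hq1 : q < 1 := by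
      have : 0 < 2 / (9 * (1 + ε ^ 2)) := by positivity
      linarith
    have hq0 : 0 ≤ q := by
      have : 2 / (9 * (1 + ε ^ 2)) ≤ 1 := by
        rw [div_le_one (by positivity)]
        nlinarith [sq_nonneg ε]
      linarith
    have hb : ∀ t, y t ≤ ε * q ^ t := by
      intro t
      induction t with
      | zero => simp [h0]
      | succ t ih =>
        have hyt := hp t
        have hle : y t ≤ ε := h0 ▸ hanti.antitone (Nat.zero_le t)
        have h3 : 2 / (9 * (1 + ε ^ 2)) ≤ 2 / (9 * (1 + y t ^ 2)) := by gcongr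
        calc y (t + 1) = y t * (1 - 2 / (9 * (1 + y t ^ 2))) := by rw [hs]; ring
          _ ≤ y t * q := by
            apply mul_le_mul_of_nonneg_left _ hyt.le
            linarith
          _ ≤ (ε * q ^ t) * q := mul_le_mul_of_nonneg_right ih hq0
          _ = ε * q ^ (t + 1) := by ring
    have hlim : Tendsto (fun t : ℕ => ε * q ^ t) atTop (nhds 0) := by
      simpa using (tendsto_pow_atTop_nhds_zero_of_lt_one hq0 hq1).const_mul ε
    refine squeeze_zero_norm (fun t => ?_) hlim
    rw [hy t, norm_mul, Complex.norm_I, mul_one, Complex.norm_real, Real.norm_eq_abs,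
      abs_of_pos (hp t)]
    exact hb t
end
end
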